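/- For a nondegenerate d-simplex Δ in R^d with circumcenter o_Δ, circumradius R_Δ, and centroid m_Δ, one has −Pow(Δ) = (d+1)/(d+2) · Vol(Δ) · (R_Δ^2 − ||o_Δ − m_Δ||^2). -/

import Mathlib

open MeasureTheory

/-!
In barycentric coordinates `λ`, the function `‖x - o‖ ^ 2` is the quadratic form
`∑ i, ∑ j, λ i * λ j * ⟪v i - o, v j - o⟫`, so it is enough to know the second moments of the `λ i`
over the simplex. Bisecting the simplex at the midpoint of the edge between `v i` and `v j` gives
two affine copies of it, each of half the volume, so the mean of a function over the simplex is the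
average of the means of its two pullbacks. Under the averaging of pullbacks `λ i ^ 2 - λ j ^ 2` and
`λ i ^ 2 + λ j ^ 2 - 4 * (λ i * λ j)` are eigenfunctions with eigenvalues `1 / 2` and `1 / 4`, hence
have integral zero. So all `λ i ^ 2` have the same integral, twice that of any `λ i * λ j` with
`i ≠ j`, and `(∑ i, λ i) ^ 2 = 1` fixes the common value.
-/

section ChangeOfVariables

variable {E F : Type*} [NormedAddCommGroup E] [NormedSpace ℝ E] [FiniteDimensional ℝ E]
  [MeasurableSpace E] [BorelSpace E] [NormedAddCommGroup F] [NormedSpace ℝ F]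
  (μ : Measure E) [μ.IsAddHaarMeasure]

theorem map_affineMap_addHaar_eq_smul_addHaar {T : E →ᵃ[ℝ] E} (hT : T.linear.det ≠ 0) :
    μ.map T = ENNReal.ofReal |T.linear.det⁻¹| • μ := by
  have hlin : Measurable T.linear := T.linear.continuous_of_finiteDimensional.measurable
  have hcomp : (T : E → E) = (· + T 0) ∘ T.linear := T.decomp
  rw [hcomp, ← Measure.map_map (measurable_add_const _) hlin,
    Measure.map_linearMap_addHaar_eq_smul_addHaar μ hT, Measure.map_smul,
    map_add_right_eq_self]

theorem setIntegral_preimage_affineEquiv (T : E ≃ᵃ[ℝ] E) (s : Set E) (f : E → F) :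
    ∫ x in T ⁻¹' s, f (T x) ∂μ = |(T.linear : E →ₗ[ℝ] E).det|⁻¹ • ∫ x in s, f x ∂μ := by
  have hT : MeasurableEmbedding T :=
    (AffineEquiv.toContinuousAffineEquiv T).toHomeomorph.measurableEmbedding
  have hmap : μ.map T = ENNReal.ofReal |(T.linear : E →ₗ[ℝ] E).det⁻¹| • μ :=
    map_affineMap_addHaar_eq_smul_addHaar μ (T := T) T.linear.isUnit_det'.ne_zero
  rw [← hT.setIntegral_map, hmap, Measure.restrict_smul, integral_smul_measure,
    ENNReal.toReal_ofReal (abs_nonneg _), abs_inv]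

end ChangeOfVariables

section BarycentricCoordinates

variable {ι k V : Type*} [Ring k] [AddCommGroup V] [Module k V] (b : AffineBasis ι k V)

theorem coord_linear_sub (i : ι) (x y : V) :
    (b.coord i).linear (x - y) = b.coord i x - b.coord i y :=
  (b.coord i).linearMap_vsub x y

theorem sum_coord_smul_sub [Fintype ι] (x o : V) : ∑ i, b.coord i x • (b i - o) = x - o := by
  simp_rw [smul_sub, Finset.sum_sub_distrib, ← Finset.sum_smul]
  rw [b.linear_combination_coord_eq_self, b.sum_coord_apply_eq_one, one_smul]

end BarycentricCoordinates

section EdgeBisection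

variable {ι E : Type*} [AddCommGroup E] [Module ℝ E] (b : AffineBasis ι ℝ E)

theorem isUnit_one_add_coord_linear_half_edge (i j : ι) :
    IsUnit (1 + (b.coord j).linear ((1 / 2 : ℝ) • (b i - b j))) := by
  rw [map_smul, coord_linear_sub]
  rcases eq_or_ne i j with rfl | hij
  · simp
  · norm_num [b.coord_apply_ne hij.symm]

/-- The affine automorphism fixing every vertex of the simplex with vertices `b` except `b j`, which
it sends to the midpoint of `b i` and `b j`. It maps the simplex onto one half of its bisection
along the edge from `b i` to `b j`. -/
noncomputable def bisectEdge (i j : ι) : E ≃ᵃ[ℝ] E :=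
  AffineEquiv.mk' (fun x => x + (b.coord j x / 2) • (b i - b j))
    (LinearEquiv.dilatransvection (isUnit_one_add_coord_linear_half_edge b i j)) (b i) fun x => by
      simp only [LinearEquiv.dilatransvection.apply, vsub_eq_sub, vadd_eq_add, coord_linear_sub]
      module

theorem coord_bisectEdge (i j k : ι) (x : E) :
    b.coord k (bisectEdge b i j x) =
      b.coord k x + b.coord j x / 2 * (b.coord k (b i) - b.coord k (b j)) := by
  have hadd : bisectEdge b i j x = (b.coord j x / 2) • (b i - b j) +ᵥ x := add_comm _ _
  rw [hadd, AffineMap.map_vadd, map_smul, coord_linear_sub, vadd_eq_add, smul_eq_mul, add_comm]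

variable {i j : ι}

theorem coord_bisectEdge_left (hij : i ≠ j) (x : E) :
    b.coord i (bisectEdge b i j x) = b.coord i x + b.coord j x / 2 := by
  simp [coord_bisectEdge, b.coord_apply_ne hij]

theorem coord_bisectEdge_right (hij : i ≠ j) (x : E) :
    b.coord j (bisectEdge b i j x) = b.coord j x / 2 := by
  rw [coord_bisectEdge, b.coord_apply_eq, b.coord_apply_ne hij.symm]
  ring

theorem coord_bisectEdge_of_ne {k : ι} (hki : k ≠ i) (hkj : k ≠ j) (x : E) :
    b.coord k (bisectEdge b i j x) = b.coord k x := by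
  simp [coord_bisectEdge, b.coord_apply_ne hki, b.coord_apply_ne hkj]

theorem det_linear_bisectEdge [FiniteDimensional ℝ E] (hij : i ≠ j) :
    ((bisectEdge b i j).linear : E →ₗ[ℝ] E).det = 1 / 2 := by
  have hdet : ((bisectEdge b i j).linear : E →ₗ[ℝ] E).det =
      1 + (b.coord j).linear ((1 / 2 : ℝ) • (b i - b j)) :=
    LinearMap.transvection.det _ _
  rw [hdet, map_smul, coord_linear_sub, b.coord_apply_eq, b.coord_apply_ne hij.symm]
  norm_num

theorem bisectEdge_preimage_half_convexHull (hij : i ≠ j) :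
    bisectEdge b i j ⁻¹' (convexHull ℝ (Set.range b) ∩ {x | b.coord j x ≤ b.coord i x}) =
      convexHull ℝ (Set.range b) := by
  ext x
  simp only [b.convexHull_eq_nonneg_coord, Set.mem_preimage, Set.mem_inter_iff, Set.mem_ofPred_eq,
    coord_bisectEdge_left b hij, coord_bisectEdge_right b hij]
  constructor
  · rintro ⟨hnonneg, hle⟩ k
    have hk := hnonneg k
    by_cases hki : k = i
    · subst hki
      linarith
    by_cases hkj : k = j
    · subst hkj
      rw [coord_bisectEdge_right b hij] at hk
      linarith
    rwa [coord_bisectEdge_of_ne b hki hkj] at hk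
  · intro hnonneg
    have hi := hnonneg i
    have hj := hnonneg j
    refine ⟨fun k => ?_, by linarith⟩
    by_cases hki : k = i
    · subst hki
      rw [coord_bisectEdge_left b hij]
      linarith
    by_cases hkj : k = j
    · subst hkj
      rw [coord_bisectEdge_right b hij]
      linarith
    rw [coord_bisectEdge_of_ne b hki hkj]
    exact hnonneg k

end EdgeBisection

theorem integrableOn_convexHull_range {ι E F : Type*} [Finite ι] [NormedAddCommGroup E]
    [NormedSpace ℝ E] [MeasurableSpace E] [OpensMeasurableSpace E] [NormedAddCommGroup F]
    {μ : Measure E} [IsFiniteMeasureOnCompacts μ] (v : ι → E) {f : E → F} (hf : Continuous f) :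
    IntegrableOn f (convexHull ℝ (Set.range v)) μ :=
  hf.continuousOn.integrableOn_compact ((Set.finite_range v).isCompact_convexHull ℝ)

section Bisection

variable {ι E F : Type*} [NormedAddCommGroup E] [NormedSpace ℝ E] [FiniteDimensional ℝ E]
  [MeasurableSpace E] [BorelSpace E] [NormedAddCommGroup F] [NormedSpace ℝ F]
  (b : AffineBasis ι ℝ E) (μ : Measure E) [μ.IsAddHaarMeasure] {i j : ι}

theorem addHaar_coord_eq_coord (hij : i ≠ j) : μ {x | b.coord i x = b.coord j x} = 0 := by
  let H : AffineSubspace ℝ E := (AffineSubspace.mk' (0 : ℝ) ⊥).comap (b.coord i - b.coord j)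
  have hmem (x : E) : x ∈ H ↔ b.coord i x = b.coord j x := by
    simp [H, AffineSubspace.mem_mk', sub_eq_zero]
  have hH : H ≠ ⊤ := by
    intro htop
    have hi : b i ∈ H := htop ▸ AffineSubspace.mem_top ℝ E (b i)
    simp [hmem, b.coord_apply_ne hij.symm] at hi
  convert Measure.addHaar_affineSubspace μ H hH using 2
  ext x
  exact (hmem x).symm

theorem setIntegral_half_convexHull (hij : i ≠ j) (f : E → F) :
    ∫ x in convexHull ℝ (Set.range b) ∩ {x | b.coord j x ≤ b.coord i x}, f x ∂μ =
      (1 / 2 : ℝ) • ∫ x in convexHull ℝ (Set.range b), f (bisectEdge b i j x) ∂μ := by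
  have h := setIntegral_preimage_affineEquiv μ (bisectEdge b i j)
    (convexHull ℝ (Set.range b) ∩ {x | b.coord j x ≤ b.coord i x}) f
  rw [bisectEdge_preimage_half_convexHull b hij, det_linear_bisectEdge b hij] at h
  rw [h, smul_smul]
  norm_num

variable [Finite ι]

variable {μ} in
theorem setIntegral_convexHull_eq_bisection (hij : i ≠ j) {f : E → F}
    (hf : IntegrableOn f (convexHull ℝ (Set.range b)) μ) :
    ∫ x in convexHull ℝ (Set.range b), f x ∂μ =
      (1 / 2 : ℝ) • (∫ x in convexHull ℝ (Set.range b), f (bisectEdge b i j x) ∂μ +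
        ∫ x in convexHull ℝ (Set.range b), f (bisectEdge b j i x) ∂μ) := by
  rw [smul_add, ← setIntegral_half_convexHull b μ hij, ← setIntegral_half_convexHull b μ hij.symm]
  set D := convexHull ℝ (Set.range b)
  have hcover : D = D ∩ {x | b.coord j x ≤ b.coord i x} ∪ D ∩ {x | b.coord i x ≤ b.coord j x} := by
    rw [← Set.inter_union_distrib_left, eq_comm, Set.inter_eq_left]
    exact fun x _ => le_total (b.coord j x) (b.coord i x)
  have hdisj : AEDisjoint μ (D ∩ {x | b.coord j x ≤ b.coord i x})
      (D ∩ {x | b.coord i x ≤ b.coord j x}) :=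
    measure_mono_null (fun x hx => le_antisymm hx.2.2 hx.1.2) (addHaar_coord_eq_coord b μ hij)
  have hmeas : MeasurableSet (D ∩ {x | b.coord i x ≤ b.coord j x}) :=
    ((Set.finite_range b).isCompact_convexHull ℝ).measurableSet.inter <|
      measurableSet_le (continuous_barycentric_coord b i).measurable
        (continuous_barycentric_coord b j).measurable
  conv_lhs => rw [hcover]
  exact setIntegral_union₀ hdisj hmeas.nullMeasurableSet (hf.mono_set Set.inter_subset_left)
    (hf.mono_set Set.inter_subset_left)

theorem setIntegral_convexHull_eq_zero_of_bisection (hij : i ≠ j) {f : E → F} (hf : Continuous f)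
    {c : ℝ} (hc : c ≠ 2) (hfc : ∀ x, f (bisectEdge b i j x) + f (bisectEdge b j i x) = c • f x) :
    ∫ x in convexHull ℝ (Set.range b), f x ∂μ = 0 := by
  have hcont (k l : ι) : Continuous fun x => f (bisectEdge b k l x) :=
    hf.comp (bisectEdge b k l).continuous_of_finiteDimensional
  have h := setIntegral_convexHull_eq_bisection b hij (integrableOn_convexHull_range b hf (μ := μ))
  rw [← integral_add (integrableOn_convexHull_range b (hcont i j))
    (integrableOn_convexHull_range b (hcont j i))] at h
  simp_rw [hfc] at h
  rw [integral_smul, smul_smul, ← sub_eq_zero] at h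
  have hne : 1 - 1 / 2 * c ≠ 0 := fun h0 => hc (by linarith)
  exact (smul_eq_zero.1 (by rwa [sub_smul, one_smul])).resolve_left hne

end Bisection

section SecondMoments

variable {ι E : Type*} [NormedAddCommGroup E] [NormedSpace ℝ E] [FiniteDimensional ℝ E]
  [MeasurableSpace E] [BorelSpace E] (b : AffineBasis ι ℝ E) (μ : Measure E) [μ.IsAddHaarMeasure]

theorem integrableOn_coord_mul_coord [Finite ι] (i j : ι) :
    IntegrableOn (fun x => b.coord i x * b.coord j x) (convexHull ℝ (Set.range b)) μ :=
  integrableOn_convexHull_range b <|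
    (continuous_barycentric_coord b i).mul (continuous_barycentric_coord b j)

theorem setIntegral_coord_mul_self_eq [Finite ι] (i j : ι) :
    ∫ x in convexHull ℝ (Set.range b), b.coord i x * b.coord i x ∂μ =
      ∫ x in convexHull ℝ (Set.range b), b.coord j x * b.coord j x ∂μ := by
  rcases eq_or_ne i j with rfl | hij
  · rfl
  have hci := continuous_barycentric_coord b i
  have hcj := continuous_barycentric_coord b j
  rw [← sub_eq_zero, ← integral_sub (integrableOn_coord_mul_coord b μ i i)
    (integrableOn_coord_mul_coord b μ j j)]
  refine setIntegral_convexHull_eq_zero_of_bisection b μ hij (by fun_prop) (c := 1) (by norm_num)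
    fun x => ?_
  simp only [coord_bisectEdge_left b hij, coord_bisectEdge_right b hij,
    coord_bisectEdge_left b hij.symm, coord_bisectEdge_right b hij.symm, smul_eq_mul]
  ring

theorem setIntegral_coord_mul_coord_of_ne [Finite ι] {i j : ι} (hij : i ≠ j) :
    ∫ x in convexHull ℝ (Set.range b), b.coord i x * b.coord j x ∂μ =
      (∫ x in convexHull ℝ (Set.range b), b.coord i x * b.coord i x ∂μ) / 2 := by
  have hci := continuous_barycentric_coord b i
  have hcj := continuous_barycentric_coord b j
  have hzero : ∫ x in convexHull ℝ (Set.range b), (b.coord i x * b.coord i x +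
      b.coord j x * b.coord j x - 4 * (b.coord i x * b.coord j x)) ∂μ = 0 := by
    refine setIntegral_convexHull_eq_zero_of_bisection b μ hij (by fun_prop) (c := 1 / 2)
      (by norm_num) fun x => ?_
    simp only [coord_bisectEdge_left b hij, coord_bisectEdge_right b hij,
      coord_bisectEdge_left b hij.symm, coord_bisectEdge_right b hij.symm, smul_eq_mul]
    ring
  have hint := integrableOn_coord_mul_coord b μ
  rw [integral_sub (integrableOn_convexHull_range b (by fun_prop)) ((hint i j).const_mul 4),
    integral_add (hint i i) (hint j j), integral_const_mul,
    ← setIntegral_coord_mul_self_eq b μ i j] at hzero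
  linarith

variable [Fintype ι]

theorem sum_setIntegral_coord_mul_coord :
    ∑ i, ∑ j, ∫ x in convexHull ℝ (Set.range b), b.coord i x * b.coord j x ∂μ =
      μ.real (convexHull ℝ (Set.range b)) := by
  have hint := integrableOn_coord_mul_coord b μ
  simp_rw [← integral_finsetSum _ fun j _ => hint _ j]
  rw [← integral_finsetSum _ fun i _ => integrable_finsetSum _ fun j _ => hint i j]
  simp_rw [← Finset.mul_sum, b.sum_coord_apply_eq_one, mul_one, b.sum_coord_apply_eq_one]
  simp

theorem setIntegral_coord_mul_coord [DecidableEq ι] (i j : ι) :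
    ∫ x in convexHull ℝ (Set.range b), b.coord i x * b.coord j x ∂μ =
      μ.real (convexHull ℝ (Set.range b)) / (Fintype.card ι * (Fintype.card ι + 1)) *
        (1 + if i = j then 1 else 0) := by
  obtain ⟨a, ha⟩ : ∃ a, ∀ k l, ∫ x in convexHull ℝ (Set.range b), b.coord k x * b.coord l x ∂μ =
      a * (1 + if k = l then 1 else 0) := by
    refine ⟨(∫ x in convexHull ℝ (Set.range b), b.coord i x * b.coord i x ∂μ) / 2, fun k l => ?_⟩
    rw [setIntegral_coord_mul_self_eq b μ i k]
    rcases eq_or_ne k l with rfl | hkl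
    · rw [if_pos rfl]
      ring
    · rw [setIntegral_coord_mul_coord_of_ne b μ hkl, if_neg hkl, add_zero, mul_one]
  have hcard : (Fintype.card ι : ℝ) ≠ 0 :=
    Nat.cast_ne_zero.2 (Fintype.card_pos_iff.2 b.nonempty).ne'
  have hvol : a * (Fintype.card ι * (Fintype.card ι + 1)) =
      μ.real (convexHull ℝ (Set.range b)) := by
    rw [← sum_setIntegral_coord_mul_coord b μ]
    simp_rw [ha, ← Finset.mul_sum, Finset.sum_add_distrib]
    simp only [Finset.sum_const, Finset.card_univ, nsmul_eq_mul, mul_one, Finset.sum_ite_eq,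
      Finset.mem_univ, if_true]
    ring
  rw [ha, ← hvol]
  field_simp

end SecondMoments

section Power

variable {ι E : Type*} [Fintype ι] [NormedAddCommGroup E] [InnerProductSpace ℝ E]
  (b : AffineBasis ι ℝ E)

theorem norm_sub_sq_eq_sum_coord_mul_coord (x o : E) :
    ‖x - o‖ ^ 2 =
      ∑ i, ∑ j, b.coord i x * b.coord j x * inner ℝ (b i - o) (b j - o) := by
  rw [← real_inner_self_eq_norm_sq, ← sum_coord_smul_sub b x o]
  simp_rw [sum_inner, inner_sum, real_inner_smul_left, real_inner_smul_right, mul_assoc]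

variable [FiniteDimensional ℝ E] [MeasurableSpace E] [BorelSpace E]
  (μ : Measure E) [μ.IsAddHaarMeasure]

theorem setIntegral_norm_sub_sq_convexHull (o : E) :
    ∫ x in convexHull ℝ (Set.range b), ‖x - o‖ ^ 2 ∂μ =
      μ.real (convexHull ℝ (Set.range b)) / (Fintype.card ι * (Fintype.card ι + 1)) *
        (‖∑ i, (b i - o)‖ ^ 2 + ∑ i, ‖b i - o‖ ^ 2) := by
  classical
  have hint (i j : ι) := (integrableOn_coord_mul_coord b μ i j).mul_const
    (inner ℝ (b i - o) (b j - o))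
  have hsum : ‖∑ i, (b i - o)‖ ^ 2 = ∑ i, ∑ j, inner ℝ (b i - o) (b j - o) := by
    simp_rw [← real_inner_self_eq_norm_sq, sum_inner, inner_sum]
  rw [integral_congr_ae (.of_forall fun x => norm_sub_sq_eq_sum_coord_mul_coord b x o),
    integral_finsetSum _ fun i _ => integrable_finsetSum _ fun j _ => hint i j]
  simp_rw [integral_finsetSum _ fun j _ => hint _ j, integral_mul_const,
    setIntegral_coord_mul_coord, mul_assoc, ← Finset.mul_sum, add_mul, Finset.sum_add_distrib,
    ite_mul, one_mul, zero_mul, Finset.sum_ite_eq, Finset.mem_univ, if_true,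
    real_inner_self_eq_norm_sq, hsum]

theorem neg_pow_eq_circumradius_centroid_general (o : E) (R : ℝ) (ho : ∀ i, dist (b i) o = R)
    (m : E) (hm : m = (Fintype.card ι : ℝ)⁻¹ • ∑ i, b i) :
    -(∫ x in convexHull ℝ (Set.range b), (‖x - o‖ ^ 2 - R ^ 2) ∂μ) =
      (Fintype.card ι : ℝ) / (Fintype.card ι + 1) * μ.real (convexHull ℝ (Set.range b)) *
        (R ^ 2 - ‖o - m‖ ^ 2) := by
  have hcard : (Fintype.card ι : ℝ) ≠ 0 :=
    Nat.cast_ne_zero.2 (Fintype.card_pos_iff.2 b.nonempty).ne'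
  have hcentroid : ∑ i, (b i - o) = (Fintype.card ι : ℝ) • (m - o) := by
    rw [hm, smul_sub, smul_inv_smul₀ hcard, Finset.sum_sub_distrib, Finset.sum_const,
      Finset.card_univ, Nat.cast_smul_eq_nsmul]
  have hnorm : ‖∑ i, (b i - o)‖ ^ 2 = (Fintype.card ι : ℝ) ^ 2 * ‖o - m‖ ^ 2 := by
    rw [hcentroid, norm_smul, mul_pow, norm_sub_rev, Real.norm_natCast]
  have hradius : ∑ i, ‖b i - o‖ ^ 2 = Fintype.card ι * R ^ 2 := by
    simp [← dist_eq_norm, ho]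
  rw [integral_sub (integrableOn_convexHull_range b (by fun_prop))
      (integrableOn_convexHull_range b continuous_const),
    setIntegral_norm_sub_sq_convexHull b μ o, setIntegral_const, smul_eq_mul, hnorm, hradius]
  field_simp
  ring

end Power

/-- `-Pow(Δ) = (d+1)/(d+2) · Vol(Δ) · (R² - ‖o - m‖²)` for a nondegenerate `d`-simplex. -/
theorem neg_pow_eq_circumradius_centroid {d : ℕ}
    (v : Fin (d + 1) → EuclideanSpace ℝ (Fin d)) (hv : AffineIndependent ℝ v)
    (o : EuclideanSpace ℝ (Fin d)) (R : ℝ) (ho : ∀ i, dist (v i) o = R)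
    (m : EuclideanSpace ℝ (Fin d)) (hm : m = ((d : ℝ) + 1)⁻¹ • ∑ i, v i) :
    -(∫ x in convexHull ℝ (Set.range v), (‖x - o‖ ^ 2 - R ^ 2)) =
      ((d : ℝ) + 1) / ((d : ℝ) + 2) * (volume (convexHull ℝ (Set.range v))).toReal *
        (R ^ 2 - ‖o - m‖ ^ 2) := by
  have hspan : affineSpan ℝ (Set.range v) = ⊤ :=
    hv.affineSpan_eq_top_iff_card_eq_finrank_add_one.2 (by simp)
  have hcentroid : m = (Fintype.card (Fin (d + 1)) : ℝ)⁻¹ • ∑ i, v i := by simpa using hm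
  have h := neg_pow_eq_circumradius_centroid_general ⟨v, hv, hspan⟩ volume o R ho m hcentroid
  rw [Fintype.card_fin, Nat.cast_succ, add_assoc, one_add_one_eq_two] at h
  exact h
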